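/- Fix n ≥ 6. Let G = A_{n−1} be the anticycle on [n−1] and let F be the star on [n] with edges {i, n} for 1 ≤ i ≤ n−3. Then the product ideal I_G · I_F^2 has linear quotients via the ordering of its minimal monomial generators given by decreasing lexicographic order induced by x_n > x_{n−1} > … > x_1. -/

import Mathlib

open MvPolynomial

noncomputable section

/-- The edge ideal of a finite simple graph on vertex set `Fin n`
(vertex with index `v` corresponds to the vertex `v+1` of `[n]`). -/
def edgeIdeal (K : Type*) [Field K] {n : ℕ} (G : SimpleGraph (Fin n)) :
    Ideal (MvPolynomial (Fin n) K) :=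
  Ideal.span {p | ∃ i j : Fin n, G.Adj i j ∧ p = X i * X j}

/-- `d` is the exponent vector of a minimal monomial generator of `I`. -/
def IsMinGen {K : Type*} [Field K] {n : ℕ} (I : Ideal (MvPolynomial (Fin n) K))
    (d : Fin n →₀ ℕ) : Prop :=
  monomial d (1 : K) ∈ I ∧
    ∀ e : Fin n →₀ ℕ, e ≤ d → e ≠ d → monomial e (1 : K) ∉ I

/-- A list of exponent vectors `L = [d_1, …, d_r]` is a linear quotient ordering if
for every `i ≥ 2` the colon ideal `(x^{d_1}, …, x^{d_{i-1}}) : x^{d_i}` is generated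
by a subset of the variables. -/
def IsLinQuotOrder (K : Type*) [Field K] {n : ℕ} (L : List (Fin n →₀ ℕ)) : Prop :=
  ∀ i : Fin L.length, 0 < i.val →
    ∃ V : Set (Fin n),
      Submodule.colon
        (Ideal.span {m : MvPolynomial (Fin n) K |
          ∃ k : Fin L.length, k.val < i.val ∧ m = monomial (L.get k) 1})
        (Ideal.span {monomial (L.get i) (1 : K)}) =
      Ideal.span ((fun v : Fin n => (X v : MvPolynomial (Fin n) K)) '' V)

/-- A monomial ideal has linear quotients if it is principal or admits a
linear quotient ordering of its minimal monomial generators. -/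
def HasLinearQuotients {K : Type*} [Field K] {n : ℕ}
    (I : Ideal (MvPolynomial (Fin n) K)) : Prop :=
  (∃ p, I = Ideal.span {p}) ∨
    ∃ L : List (Fin n →₀ ℕ), L.Nodup ∧ (∀ d, d ∈ L ↔ IsMinGen I d) ∧ IsLinQuotOrder K L

/-- `lexLt d e` : the monomial `x^d` is lexicographically smaller than `x^e`
for the lexicographic order induced by `x_n > x_{n-1} > … > x_1`. -/
def lexLt {n : ℕ} (d e : Fin n →₀ ℕ) : Prop :=
  ∃ k : Fin n, d k < e k ∧ ∀ m : Fin n, k < m → d m = e m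

/-- `L` lists the minimal monomial generators of `I` in decreasing lexicographic order. -/
def LexDecMinGenOrder {K : Type*} [Field K] {n : ℕ} (I : Ideal (MvPolynomial (Fin n) K))
    (L : List (Fin n →₀ ℕ)) : Prop :=
  List.Pairwise (fun d e => lexLt e d) L ∧ ∀ d, d ∈ L ↔ IsMinGen I d

/-- The anticycle on `[m]` : `{i,j}` is an edge iff `i ≠ j` and `i - j ≢ ±1 (mod m)`. -/
def anticycle (m : ℕ) : SimpleGraph (Fin m) where
  Adj i j := i ≠ j ∧ (i.val + 1) % m ≠ j.val ∧ (j.val + 1) % m ≠ i.val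
  symm := ⟨fun i j h => ⟨h.1.symm, h.2.2, h.2.1⟩⟩
  loopless := ⟨fun i h => h.1 rfl⟩

/-- The anticycle on `[m]` regarded as a graph on the vertex set `[n]`. -/
def anticycleIn (n m : ℕ) : SimpleGraph (Fin n) where
  Adj i j := i ≠ j ∧ i.val < m ∧ j.val < m ∧ (i.val + 1) % m ≠ j.val ∧ (j.val + 1) % m ≠ i.val
  symm := ⟨fun i j h => ⟨h.1.symm, h.2.2.1, h.2.1, h.2.2.2.2, h.2.2.2.1⟩⟩
  loopless := ⟨fun i h => h.1 rfl⟩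

/-- The star on `[n]` with edges `{i, n}` for `1 ≤ i ≤ n - 3`
(in the `0`-indexed picture: edges `{i, n-1}` for `i ≤ n - 4`). -/
def starF (n : ℕ) : SimpleGraph (Fin n) :=
  SimpleGraph.fromRel (fun i j => i.val + 4 ≤ n ∧ j.val = n - 1)

/-- `AgreeOrder n s i j t` : the degree-`s` monomials with ascending (0-indexed)
index sequences `i` and `j` agree in order `t`. -/
def AgreeOrder (n s : ℕ) (i j : ℕ → Fin n) (t : ℕ) : Prop :=
  if t = 0 then j (s - 1) < i (s - 1)
  else (∀ l, s - t ≤ l → l ≤ s - 1 → i l = j l) ∧ i (s - t - 1) ≠ j (s - t - 1)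

theorem lexLt_trans' {n : ℕ} {a b c : Fin n →₀ ℕ} (h1 : lexLt a b) (h2 : lexLt b c) :
    lexLt a c := by
  obtain ⟨k, hk, hk'⟩ := h1
  obtain ⟨l, hl, hl'⟩ := h2
  rcases lt_trichotomy k l with h | h | h
  · exact ⟨l, by rw [hk' l h]; exact hl, fun m hm => (hk' m (h.trans hm)).trans (hl' m hm)⟩
  · subst h
    exact ⟨k, hk.trans hl, fun m hm => (hk' m hm).trans (hl' m hm)⟩
  · exact ⟨k, by rw [← hl' k h]; exact hk, fun m hm => (hk' m hm).trans (hl' m (h.trans hm))⟩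

theorem lexLt_irrefl' {n : ℕ} (a : Fin n →₀ ℕ) : ¬ lexLt a a := by
  rintro ⟨k, hk, _⟩
  exact lt_irrefl _ hk

theorem lexLt_total' {n : ℕ} (a b : Fin n →₀ ℕ) : a = b ∨ lexLt a b ∨ lexLt b a := by
  by_cases hab : a = b
  · exact Or.inl hab
  right
  have hne : (Finset.univ.filter fun i => a i ≠ b i).Nonempty := by
    by_contra hcon
    apply hab
    ext i
    by_contra hi
    exact hcon ⟨i, by simp [hi]⟩
  obtain ⟨k, hk, hmax⟩ := Finset.exists_max_image _ id hne
  simp only [Finset.mem_filter, Finset.mem_univ, true_and, id] at hk hmax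
  have heq : ∀ m, k < m → a m = b m := fun m hm => by
    by_contra h
    exact absurd (hmax m h) (not_le.mpr hm)
  rcases lt_or_gt_of_ne hk with h | h
  · exact Or.inl ⟨k, h, heq⟩
  · exact Or.inr ⟨k, h, fun m hm => (heq m hm).symm⟩

theorem exists_lex_list {n : ℕ} (Q : Set (Fin n →₀ ℕ)) (hQ : Q.Finite) :
    ∃ L : List (Fin n →₀ ℕ), L.Pairwise (fun d e => lexLt e d) ∧ ∀ d, d ∈ L ↔ d ∈ Q := by
  classical
  let r : (Fin n →₀ ℕ) → (Fin n →₀ ℕ) → Prop := fun d e => d = e ∨ lexLt e d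
  haveI : IsTrans _ r := ⟨fun a b c h1 h2 => by
    rcases h1 with rfl | h1
    · exact h2
    · rcases h2 with rfl | h2
      · exact Or.inr h1
      · exact Or.inr (lexLt_trans' h2 h1)⟩
  haveI : Std.Antisymm r := ⟨fun a b h1 h2 => by
    rcases h1 with h1 | h1
    · exact h1
    · rcases h2 with h2 | h2
      · exact h2.symm
      · exact absurd (lexLt_trans' h1 h2) (lexLt_irrefl' _)⟩
  haveI : Std.Total r := ⟨fun a b => by
    rcases lexLt_total' a b with h | h | h
    · exact Or.inl (Or.inl h)
    · exact Or.inr (Or.inr h)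
    · exact Or.inl (Or.inr h)⟩
  refine ⟨hQ.toFinset.sort r, ?_, fun d => by simp⟩
  have h1 := Finset.pairwise_sort hQ.toFinset r
  have h2 : List.Pairwise (· ≠ ·) (hQ.toFinset.sort r) := Finset.sort_nodup hQ.toFinset r
  refine (h1.and h2).imp ?_
  rintro a b ⟨h | h, h'⟩
  · exact absurd h h'
  · exact h

theorem isMinGen_iff {K : Type*} [Field K] {n D : ℕ} (Q : Set (Fin n →₀ ℕ))
    (hD : ∀ d ∈ Q, d.degree = D) (d : Fin n →₀ ℕ) :
    IsMinGen (Ideal.span ((fun s => monomial s (1 : K)) '' Q)) d ↔ d ∈ Q := by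
  have key : ∀ e : Fin n →₀ ℕ, monomial e (1 : K) ∈
      Ideal.span ((fun s => monomial s (1 : K)) '' Q) ↔ ∃ s ∈ Q, s ≤ e := by
    intro e
    rw [mem_ideal_span_monomial_image]
    simp [support_monomial]
  unfold IsMinGen
  simp only [key]
  constructor
  · rintro ⟨⟨s, hs, hsd⟩, h2⟩
    by_cases h : s = d
    · exact h ▸ hs
    · exact absurd ⟨s, hs, le_rfl⟩ (h2 s hsd h)
  · intro hd
    refine ⟨⟨d, hd, le_rfl⟩, ?_⟩
    rintro e hed hne ⟨s, hs, hse⟩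
    apply hne
    have h1 := Finsupp.degree_mono hse
    have h2 := hD s hs
    have h3 := hD d hd
    have h4 : e + (d - e) = d := add_tsub_cancel_of_le hed
    have h5 := congrArg Finsupp.degree h4
    rw [map_add] at h5
    have h6 : (d - e).degree = 0 := by omega
    rw [Finsupp.degree_eq_zero_iff] at h6
    rw [h6, add_zero] at h4
    exact h4

theorem linQuot_of_exchange {K : Type*} [Field K] {n : ℕ} (Q : Set (Fin n →₀ ℕ))
    (hex : ∀ u ∈ Q, ∀ v ∈ Q, lexLt u v →
      ∃ k, u k < v k ∧ ∃ w ∈ Q, lexLt u w ∧ w ≤ u + Finsupp.single k 1)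
    (L : List (Fin n →₀ ℕ)) (hL : L.Pairwise (fun d e => lexLt e d))
    (hm : ∀ d, d ∈ L ↔ d ∈ Q) : IsLinQuotOrder K L := by
  intro i _
  have hlt : ∀ a b : Fin L.length, a < b ↔ lexLt (L.get b) (L.get a) := by
    intro a b
    constructor
    · exact fun h => List.pairwise_iff_get.mp hL a b h
    · intro h
      rcases lt_trichotomy a b with h' | h' | h'
      · exact h'
      · subst h'; exact absurd h (lexLt_irrefl' _)
      · exact absurd (lexLt_trans' h (List.pairwise_iff_get.mp hL b a h')) (lexLt_irrefl' _)
  have hset : {m : MvPolynomial (Fin n) K |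
          ∃ k : Fin L.length, k.val < i.val ∧ m = monomial (L.get k) 1} =
      (fun s => monomial s (1 : K)) '' {s | s ∈ Q ∧ lexLt (L.get i) s} := by
    ext m
    constructor
    · rintro ⟨k, hk, rfl⟩
      exact ⟨L.get k, ⟨(hm _).1 (List.get_mem _ _), (hlt k i).1 hk⟩, rfl⟩
    · rintro ⟨s, ⟨hs, hs'⟩, rfl⟩
      obtain ⟨k, rfl⟩ := List.get_of_mem ((hm s).2 hs)
      exact ⟨k, (hlt k i).2 hs', rfl⟩
  have hui : L.get i ∈ Q := (hm _).1 (List.get_mem _ _)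
  rw [hset]
  generalize L.get i = u at *
  set J := Ideal.span ((fun s => monomial s (1 : K)) '' {s | s ∈ Q ∧ lexLt u s}) with hJ
  refine ⟨{v | ∃ w ∈ Q, lexLt u w ∧ w ≤ u + Finsupp.single v 1}, ?_⟩
  apply le_antisymm
  · intro f hf
    rw [Ideal.mem_colon_span_singleton, hJ, mem_ideal_span_monomial_image] at hf
    rw [mem_ideal_span_X_image]
    intro m hmf
    have : m + u ∈ (f * monomial u (1 : K)).support := by
      rw [mem_support_iff, coeff_mul_monomial, mul_one]
      exact mem_support_iff.1 hmf
    obtain ⟨v, ⟨hvQ, huv⟩, hv⟩ := hf _ this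
    obtain ⟨k, hk, w, hw, huw, hwle⟩ := hex u hui v hvQ huv
    refine ⟨k, ⟨w, hw, huw, hwle⟩, ?_⟩
    have := hv k
    simp only [Finsupp.add_apply] at this
    omega
  · rw [Ideal.span_le]
    rintro _ ⟨v, ⟨w, hw, huw, hwle⟩, rfl⟩
    change X v ∈ Submodule.colon _ _
    rw [Ideal.mem_colon_span_singleton, hJ, mem_ideal_span_monomial_image]
    intro x hx
    refine ⟨w, ⟨hw, huw⟩, ?_⟩
    have h1 : (X v * monomial u (1 : K) : MvPolynomial (Fin n) K)
        = monomial (u + Finsupp.single v 1) 1 := by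
      rw [X, monomial_mul, mul_one, add_comm]
    rw [h1] at hx
    have hx := Finset.mem_singleton.1 (support_monomial_subset hx)
    rw [hx]; exact hwle

/-- Combinatorial description of the generators. -/
structure Gd (n : ℕ) (p q t : Fin n) (d : Fin n →₀ ℕ) : Prop where
  ht : d t = 2
  hdeg : d.degree = 6
  hpq : d p + d q ≤ 1
  h0 : d p = 0 → d q = 0 → ∃ i j : Fin n, i.val + 2 ≤ j.val ∧ j.val + 4 ≤ n ∧ 0 < d i ∧ 0 < d j
  hp : d p = 1 → ∃ i : Fin n, i.val + 5 ≤ n ∧ 0 < d i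
  hq : d q = 1 → ∃ i : Fin n, 1 ≤ i.val ∧ i.val + 4 ≤ n ∧ 0 < d i

theorem eq_of_le_degree {n : ℕ} {w v : Fin n →₀ ℕ} (h : w ≤ v) (hd : w.degree = v.degree) :
    w = v := by
  have h4 : w + (v - w) = v := add_tsub_cancel_of_le h
  have h5 := congrArg Finsupp.degree h4
  rw [map_add] at h5
  have h6 : (v - w).degree = 0 := by omega
  rw [Finsupp.degree_eq_zero_iff] at h6
  rw [h6, add_zero] at h4
  exact h4

theorem exists_move {n : ℕ} (u : Fin n →₀ ℕ) (l k : Fin n) (hlk : l < k) (hl : 0 < u l) :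
    ∃ w : Fin n →₀ ℕ, w.degree = u.degree ∧ lexLt u w ∧ w ≤ u + Finsupp.single k 1 ∧
      w l + 1 = u l ∧ w k = u k + 1 ∧ ∀ j, j ≠ l → j ≠ k → w j = u j := by
  have hle : Finsupp.single l 1 ≤ u := by
    rw [Finsupp.single_le_iff]; exact hl
  obtain ⟨r, rfl⟩ := exists_add_of_le hle
  have hne : l ≠ k := hlk.ne
  have hval : ∀ j, j ≠ l → j ≠ k →
      (r + Finsupp.single k 1 : Fin n →₀ ℕ) j = (Finsupp.single l 1 + r : Fin n →₀ ℕ) j := by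
    intro j h1 h2
    simp [Finsupp.single_apply, h1.symm, h2.symm]
  refine ⟨r + Finsupp.single k 1, ?_, ⟨k, ?_, ?_⟩, ?_, ?_, ?_, hval⟩
  · simp [Finsupp.degree_single, add_comm]
  · simp [hne]
  · intro m hm
    exact (hval m (hlk.trans hm).ne' hm.ne').symm
  · intro j
    simp
  · simp [hne.symm, add_comm]
  · simp [hne]

theorem exists_lower {n : ℕ} {u v : Fin n →₀ ℕ} (hd : u.degree = v.degree) {k : Fin n}
    (hk : u k < v k) (hk' : ∀ m, k < m → u m = v m) : ∃ l, l < k ∧ v l < u l := by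
  by_contra hcon
  push Not at hcon
  have hle : u ≤ v := by
    intro j
    rcases lt_trichotomy j k with h | h | h
    · exact hcon j h
    · subst h; exact hk.le
    · exact (hk' j h).le
  have := eq_of_le_degree hle hd
  rw [this] at hk
  exact lt_irrefl _ hk

theorem exchange_same {n : ℕ} (hn : 6 ≤ n) {p q t : Fin n} (hp : p.val = n - 3)
    (hq : q.val = n - 2) (ht : t.val = n - 1) {u v : Fin n →₀ ℕ}
    (hu : Gd n p q t u) (hv : Gd n p q t v) {k : Fin n}
    (hk : u k < v k) (hk' : ∀ m, k < m → u m = v m) (hkp : k < p) :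
    ∃ w, Gd n p q t w ∧ lexLt u w ∧ w ≤ u + Finsupp.single k 1 := by
  obtain ⟨l0, hl0, hl0'⟩ := exists_lower (hu.hdeg.trans hv.hdeg.symm) hk hk'
  have hne : (Finset.univ.filter fun i => i < k ∧ 0 < u i).Nonempty :=
    ⟨l0, by simp; exact ⟨hl0, by omega⟩⟩
  obtain ⟨l, hl, hmax⟩ := Finset.exists_max_image _ id hne
  simp only [Finset.mem_filter, Finset.mem_univ, true_and, id] at hl hmax
  obtain ⟨w, hwd, hlw, hwle, hwl, hwk, hwj⟩ := exists_move u l k hl.1 hl.2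
  have hlk : l.val < k.val := hl.1
  have hkp' : k.val < p.val := hkp
  have hwp : w p = u p := hwj p (by rintro rfl; omega) (by rintro rfl; omega)
  have hwq : w q = u q := hwj q (by rintro rfl; omega) (by rintro rfl; omega)
  have hwt : w t = u t := hwj t (by rintro rfl; omega) (by rintro rfl; omega)
  by_cases hz : ∀ i, i < k → w i = 0
  · have : w = v := by
      apply eq_of_le_degree _ (hwd.trans (hu.hdeg.trans hv.hdeg.symm))
      intro j
      rcases lt_trichotomy j k with h | h | h
      · rw [hz j h]; exact Nat.zero_le _
      · subst h; omega
      · rw [hwj j (hl.1.trans h).ne' h.ne']; exact (hk' j h).le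
    subst this
    exact ⟨w, hv, hlw, hwle⟩
  push Not at hz
  obtain ⟨i0, hi0, hi0'⟩ := hz
  have hi0k : i0.val < k.val := hi0
  refine ⟨w, ⟨by rw [hwt, hu.ht], hwd.trans hu.hdeg, by rw [hwp, hwq]; exact hu.hpq, ?_, ?_, ?_⟩,
    hlw, hwle⟩
  · intro h1 h2
    obtain ⟨i, j, hij, hj, hui, huj⟩ := hu.h0 (by omega) (by omega)
    by_cases hwi : w i = 0
    · have hil : i = l := by
        by_contra h
        by_cases h' : i = k
        · subst h'; omega
        · rw [hwj i h h'] at hwi; omega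
      subst hil
      have hne : i0 ≠ i := by rintro rfl; exact hi0' hwi
      have hui0 : 0 < u i0 := by rw [← hwj i0 hne hi0.ne]; omega
      have hle : i0.val ≤ i.val := hmax i0 ⟨hi0, hui0⟩
      refine ⟨i0, j, by omega, hj, by omega, ?_⟩
      by_cases h' : j = k
      · subst h'; omega
      · rw [hwj j (by rintro rfl; omega) h']; exact huj
    · by_cases hwj0 : w j = 0
      · have hjl : j = l := by
          by_contra h
          by_cases h' : j = k
          · subst h'; omega
          · rw [hwj j h h'] at hwj0; omega
        subst hjl
        exact ⟨i, k, by omega, by omega, by omega, by omega⟩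
      · exact ⟨i, j, hij, hj, by omega, by omega⟩
  · intro h
    exact ⟨i0, by omega, by omega⟩
  · intro h
    exact ⟨k, by omega, by omega, by omega⟩

theorem exchange_gd {n : ℕ} (hn : 6 ≤ n) {p q t : Fin n} (hp : p.val = n - 3)
    (hq : q.val = n - 2) (ht : t.val = n - 1) {u v : Fin n →₀ ℕ}
    (hu : Gd n p q t u) (hv : Gd n p q t v) (huv : lexLt u v) :
    ∃ k, u k < v k ∧ ∃ w, Gd n p q t w ∧ lexLt u w ∧ w ≤ u + Finsupp.single k 1 := by
  obtain ⟨k, hk, hk'⟩ := huv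
  have hpq : p ≠ q := by rintro rfl; omega
  have hpt : p ≠ t := by rintro rfl; omega
  have hqt : q ≠ t := by rintro rfl; omega
  have hut := hu.ht
  have hvt := hv.ht
  have hupq := hu.hpq
  have hvpq := hv.hpq
  by_cases hkp : k < p
  · exact ⟨k, hk, exchange_same hn hp hq ht hu hv hk hk' hkp⟩
  have hkp' : p.val ≤ k.val := not_lt.mp hkp
  have hkt : k ≠ t := by rintro rfl; omega
  have hkt' : k.val ≠ t.val := fun h => hkt (Fin.ext h)
  by_cases hkq : k = q
  · subst hkq
    by_cases hup : u p = 0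
    · obtain ⟨i, j, hij, hj, hui, huj⟩ := hu.h0 hup (by omega)
      obtain ⟨w, hwd, hlw, hwle, hwl, hwk, hwj⟩ := exists_move u i k
        (by rw [Fin.lt_def]; omega) hui
      have hwp : w p = u p := hwj p (by rintro rfl; omega) hpq
      have hwt : w t = u t := hwj t (by rintro rfl; omega) hqt.symm
      have hwj' : w j = u j := hwj j (by rintro rfl; omega) (by rintro rfl; omega)
      exact ⟨k, hk, w, ⟨by omega, hwd.trans hu.hdeg, by omega, by omega, by omega,
        fun _ => ⟨j, by omega, hj, by omega⟩⟩, hlw, hwle⟩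
    · by_cases hex : ∃ i : Fin n, 1 ≤ i.val ∧ i.val + 4 ≤ n ∧ 0 < u i
      · obtain ⟨i, hi1, hi2, hi3⟩ := hex
        obtain ⟨w, hwd, hlw, hwle, hwl, hwk, hwj⟩ := exists_move u p k
          (by rw [Fin.lt_def]; omega) (by omega)
        have hwt : w t = u t := hwj t hpt.symm hqt.symm
        have hwi : w i = u i := hwj i (by rintro rfl; omega) (by rintro rfl; omega)
        exact ⟨k, hk, w, ⟨by omega, hwd.trans hu.hdeg, by omega, by omega, by omega,
          fun _ => ⟨i, hi1, hi2, by omega⟩⟩, hlw, hwle⟩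
      · push Not at hex
        obtain ⟨j, hj1, hj2, hj3⟩ := hv.hq (by omega)
        obtain ⟨i, hi1, hi2⟩ := hu.hp (by omega)
        have huj := hex j hj1 hj2
        have hi0 : i.val = 0 := by
          by_contra h
          have := hex i (by omega) (by omega)
          omega
        have hui : 2 ≤ u i := by
          have he : u = Finsupp.single i (u i) + Finsupp.single p (u p)
              + Finsupp.single t (u t) := by
            ext x
            have hip : i ≠ p := by rintro rfl; omega
            have hit : i ≠ t := by rintro rfl; omega
            simp only [Finsupp.add_apply, Finsupp.single_apply]
            by_cases h1 : i = x
            · subst h1; simp [hip.symm, hit.symm]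
            by_cases h2 : p = x
            · subst h2; simp [hip, hpt.symm]
            by_cases h3 : t = x
            · subst h3; simp [hit, hpt]
            simp only [h1, h2, h3, if_false]
            by_cases h4 : k = x
            · subst h4; omega
            have e1 : i.val ≠ x.val := fun h => h1 (Fin.ext h)
            have e2 : p.val ≠ x.val := fun h => h2 (Fin.ext h)
            have e3 : t.val ≠ x.val := fun h => h3 (Fin.ext h)
            have e4 : k.val ≠ x.val := fun h => h4 (Fin.ext h)
            have := hex x (by omega) (by omega)
            omega
          have hd := congrArg Finsupp.degree he
          simp only [map_add, Finsupp.degree_single] at hd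
          have := hu.hdeg
          omega
        obtain ⟨w, hwd, hlw, hwle, hwl, hwk, hwj⟩ := exists_move u i j
          (by rw [Fin.lt_def]; omega) (by omega)
        have hwt : w t = u t := hwj t (by rintro rfl; omega) (by rintro rfl; omega)
        have hwp : w p = u p := hwj p (by rintro rfl; omega) (by rintro rfl; omega)
        have hwq : w k = u k := hwj k (by rintro rfl; omega) (by rintro rfl; omega)
        exact ⟨j, by omega, w, ⟨by omega, hwd.trans hu.hdeg, by omega, by omega,
          fun _ => ⟨i, hi1, by omega⟩, by omega⟩, hlw, hwle⟩
  · have hkq' : k.val ≠ q.val := fun h => hkq (Fin.ext h)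
    have hkeq : k = p := Fin.ext (by omega)
    subst hkeq
    have hq' := hk' q (by rw [Fin.lt_def]; omega)
    obtain ⟨i, j, hij, hj, hui, huj⟩ := hu.h0 (by omega) (by omega)
    obtain ⟨w, hwd, hlw, hwle, hwl, hwk, hwj⟩ := exists_move u j k
      (by rw [Fin.lt_def]; omega) huj
    have hwq : w q = u q := hwj q (by rintro rfl; omega) hpq.symm
    have hwt : w t = u t := hwj t (by rintro rfl; omega) hpt.symm
    have hwi : w i = u i := hwj i (by rintro rfl; omega) (by rintro rfl; omega)
    exact ⟨k, hk, w, ⟨by omega, hwd.trans hu.hdeg, by omega, by omega,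
      fun _ => ⟨i, by omega, by omega⟩, by omega⟩, hlw, hwle⟩

theorem exists_single_add {n m : ℕ} (d : Fin n →₀ ℕ) (h : d.degree = m + 1) :
    ∃ a r, d = Finsupp.single a 1 + r ∧ r.degree = m := by
  have hd : d ≠ 0 := by rintro rfl; simp at h
  obtain ⟨a, ha⟩ := Finsupp.ne_iff.mp hd
  have hle : Finsupp.single a 1 ≤ d := by
    rw [Finsupp.single_le_iff]; exact Nat.one_le_iff_ne_zero.mpr ha
  obtain ⟨r, rfl⟩ := exists_add_of_le hle
  refine ⟨a, r, rfl, ?_⟩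
  rw [map_add, Finsupp.degree_single] at h
  omega

set_option maxHeartbeats 1600000 in
theorem gd_iff {n : ℕ} (hn : 6 ≤ n) {p q t : Fin n} (hp : p.val = n - 3)
    (hq : q.val = n - 2) (ht : t.val = n - 1) (d : Fin n →₀ ℕ) :
    Gd n p q t d ↔ ∃ i j a b : Fin n, (anticycleIn n (n - 1)).Adj i j ∧ a.val + 4 ≤ n ∧
      b.val + 4 ≤ n ∧ d = Finsupp.single i 1 + Finsupp.single j 1 +
        (Finsupp.single a 1 + Finsupp.single t 1 + (Finsupp.single b 1 + Finsupp.single t 1)) := by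
  have hadj : ∀ i j : Fin n, i < j → ((anticycleIn n (n - 1)).Adj i j ↔
      i.val + 2 ≤ j.val ∧ j.val + 2 ≤ n ∧ (i.val = 0 → j.val + 3 ≤ n)) := by
    intro i j hij
    have hij' : i.val < j.val := hij
    have hne : i ≠ j := hij.ne
    change (i ≠ j ∧ i.val < n - 1 ∧ j.val < n - 1 ∧ (i.val + 1) % (n - 1) ≠ j.val ∧
      (j.val + 1) % (n - 1) ≠ i.val) ↔ _
    constructor
    · rintro ⟨_, h1, h2, h3, h4⟩
      rw [Nat.mod_eq_of_lt (by omega)] at h3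
      refine ⟨by omega, by omega, fun h => ?_⟩
      by_contra hc
      have : j.val + 1 = n - 1 := by omega
      rw [this, Nat.mod_self] at h4
      omega
    · rintro ⟨h1, h2, h3⟩
      refine ⟨hne, by omega, by omega, ?_, ?_⟩
      · rw [Nat.mod_eq_of_lt (by omega)]; omega
      · by_cases hc : j.val + 1 = n - 1
        · rw [hc, Nat.mod_self]; omega
        · rw [Nat.mod_eq_of_lt (by omega)]; omega
  have hpq : p ≠ q := by rintro rfl; omega
  have hpt : p ≠ t := by rintro rfl; omega
  have hqt : q ≠ t := by rintro rfl; omega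
  constructor
  · intro h
    have hdt := h.ht
    have hdpq := h.hpq
    -- it suffices to find an edge
    suffices hs : ∃ i j : Fin n, i < j ∧ (anticycleIn n (n - 1)).Adj i j ∧ 0 < d i ∧ 0 < d j ∧
        (0 < d p → j = p) ∧ (0 < d q → j = q) by
      obtain ⟨i, j, hij, hA, hi, hj, hjp, hjq⟩ := hs
      have hA' := (hadj i j hij).1 hA
      have hij' : i.val < j.val := hij
      have hit : i ≠ t := by rintro rfl; omega
      have hjt : j ≠ t := by rintro rfl; omega
      have hle : Finsupp.single i 1 + Finsupp.single j 1 + Finsupp.single t 2 ≤ d := by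
        intro x
        simp only [Finsupp.add_apply, Finsupp.single_apply]
        by_cases h1 : i = x
        · subst h1; simp [hij.ne', hit.symm]; omega
        by_cases h2 : j = x
        · subst h2; simp [hij.ne, hjt.symm]; omega
        by_cases h3 : t = x
        · subst h3; simp [hit, hjt]; omega
        simp [h1, h2, h3]
      obtain ⟨r, hr⟩ := exists_add_of_le hle
      have hdeg := h.hdeg
      rw [hr] at hdeg
      simp only [map_add, Finsupp.degree_single] at hdeg
      obtain ⟨a, r', hr1, hr2⟩ := exists_single_add (m := 1) r (by omega)
      obtain ⟨b, r'', hr3, hr4⟩ := exists_single_add (m := 0) r' (by omega)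
      rw [Finsupp.degree_eq_zero_iff] at hr4
      have hrx : ∀ x, 0 < r x → x.val + 4 ≤ n := by
        intro x hx
        have hdx := DFunLike.congr_fun hr x
        simp only [Finsupp.add_apply, Finsupp.single_apply] at hdx
        by_contra hc
        have : x = p ∨ x = q ∨ x = t := by
          rcases (by omega : x.val = n - 3 ∨ x.val = n - 2 ∨ x.val = n - 1) with h | h | h
          · exact Or.inl (Fin.ext (by omega))
          · exact Or.inr (Or.inl (Fin.ext (by omega)))
          · exact Or.inr (Or.inr (Fin.ext (by omega)))
        rcases this with rfl | rfl | rfl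
        · have hj := hjp (by omega)
          rw [if_pos hj] at hdx
          omega
        · have hj := hjq (by omega)
          rw [if_pos hj] at hdx
          omega
        · rw [if_pos rfl] at hdx
          omega
      refine ⟨i, j, a, b, hA, hrx a ?_, hrx b ?_, ?_⟩
      · rw [hr1]; simp
      · rw [hr1, hr3]; simp
      · rw [hr, hr1, hr3, hr4, show (2 : ℕ) = 1 + 1 from rfl, Finsupp.single_add]
        abel
    by_cases hp1 : d p = 0
    · by_cases hq1 : d q = 0
      · obtain ⟨i, j, hij, hj, hi1, hj1⟩ := h.h0 hp1 hq1
        have hlt : i < j := by rw [Fin.lt_def]; omega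
        exact ⟨i, j, hlt, (hadj i j hlt).2 (by omega), hi1, hj1, by omega, by omega⟩
      · obtain ⟨i, hi1, hi2, hi3⟩ := h.hq (by omega)
        have hlt : i < q := by rw [Fin.lt_def]; omega
        exact ⟨i, q, hlt, (hadj i q hlt).2 (by omega), hi3, by omega, by omega, fun _ => rfl⟩
    · obtain ⟨i, hi1, hi2⟩ := h.hp (by omega)
      have hlt : i < p := by rw [Fin.lt_def]; omega
      exact ⟨i, p, hlt, (hadj i p hlt).2 (by omega), hi2, by omega, fun _ => rfl, by omega⟩
  · intro h
    have h' : ∃ i j a b : Fin n, i < j ∧ (anticycleIn n (n - 1)).Adj i j ∧ a.val + 4 ≤ n ∧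
        b.val + 4 ≤ n ∧ d = Finsupp.single i 1 + Finsupp.single j 1 +
        (Finsupp.single a 1 + Finsupp.single t 1 + (Finsupp.single b 1 + Finsupp.single t 1)) := by
      obtain ⟨i, j, a, b, hA, ha, hb, hd⟩ := h
      rcases lt_or_gt_of_ne hA.1 with hlt | hlt
      · exact ⟨i, j, a, b, hlt, hA, ha, hb, hd⟩
      · exact ⟨j, i, a, b, hlt, hA.symm, ha, hb, by
          rw [hd, add_comm (Finsupp.single i 1) (Finsupp.single j 1)]⟩
    obtain ⟨i, j, a, b, hlt, hA, ha, hb, hd⟩ := h'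
    have hij : i.val < j.val := hlt
    have hA' := (hadj i j hlt).1 hA
    have hat : a ≠ t := by rintro rfl; omega
    have hbt : b ≠ t := by rintro rfl; omega
    have hap : a ≠ p := by rintro rfl; omega
    have hbp : b ≠ p := by rintro rfl; omega
    have haq : a ≠ q := by rintro rfl; omega
    have hbq : b ≠ q := by rintro rfl; omega
    have hit : i ≠ t := by rintro rfl; omega
    have hjt : j ≠ t := by rintro rfl; omega
    have hip : i ≠ p := by rintro rfl; omega
    have hiq : i ≠ q := by rintro rfl; omega
    have hdi : 0 < d i := by rw [hd]; simp
    have hdj : 0 < d j := by rw [hd]; simp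
    have hdp : d p = if j = p then 1 else 0 := by
      rw [hd]; simp [Finsupp.single_apply, hip, hap, hbp, hpt.symm]
    have hdq : d q = if j = q then 1 else 0 := by
      rw [hd]; simp [Finsupp.single_apply, hiq, haq, hbq, hqt.symm]
    refine ⟨?_, ?_, ?_, ?_, ?_, ?_⟩
    · rw [hd]; simp [Finsupp.single_apply, hit, hjt, hat, hbt]
    · rw [hd]; simp [Finsupp.degree_single]
    · rw [hdp, hdq]
      split_ifs with h1 h2
      · exact absurd (h1.symm.trans h2) hpq
      all_goals omega
    · intro h1 h2
      have h3 : j.val ≠ p.val := fun h => by rw [hdp, if_pos (Fin.ext h)] at h1; omega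
      have h4 : j.val ≠ q.val := fun h => by rw [hdq, if_pos (Fin.ext h)] at h2; omega
      exact ⟨i, j, hA'.1, by omega, hdi, hdj⟩
    · intro h1
      have h3 : j = p := by
        by_contra h
        rw [hdp, if_neg h] at h1; omega
      subst h3
      exact ⟨i, by omega, hdi⟩
    · intro h1
      have h3 : j = q := by
        by_contra h
        rw [hdq, if_neg h] at h1; omega
      subst h3
      exact ⟨i, by omega, by omega, hdi⟩

theorem ideal_eq (K : Type*) [Field K] {n : ℕ} (hn : 6 ≤ n) {p q t : Fin n} (hp : p.val = n - 3)
    (hq : q.val = n - 2) (ht : t.val = n - 1) :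
    edgeIdeal K (anticycleIn n (n - 1)) * edgeIdeal K (starF n) ^ 2 =
      Ideal.span ((fun s => monomial s (1 : K)) '' {d | Gd n p q t d}) := by
  have hstar : {f : MvPolynomial (Fin n) K | ∃ i j : Fin n, (starF n).Adj i j ∧ f = X i * X j}
      = {f | ∃ a : Fin n, a.val + 4 ≤ n ∧
          f = monomial (Finsupp.single a 1 + Finsupp.single t 1) 1} := by
    ext f
    have hX : ∀ a b : Fin n, (X a * X b : MvPolynomial (Fin n) K) =
        monomial (Finsupp.single a 1 + Finsupp.single b 1) 1 := by
      intro a b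
      rw [X, X, monomial_mul, mul_one]
    simp only [Set.mem_setOf_eq, starF, SimpleGraph.fromRel_adj]
    constructor
    · rintro ⟨i, j, ⟨hne, ⟨h1, h2⟩ | ⟨h1, h2⟩⟩, rfl⟩
      · obtain rfl : j = t := Fin.ext (by omega)
        exact ⟨i, h1, hX _ _⟩
      · obtain rfl : i = t := Fin.ext (by omega)
        exact ⟨j, h1, by rw [mul_comm]; exact hX _ _⟩
    · rintro ⟨a, ha, rfl⟩
      exact ⟨a, t, ⟨by rintro rfl; omega, Or.inl ⟨ha, ht⟩⟩, (hX _ _).symm⟩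
  unfold edgeIdeal
  rw [hstar, sq, Ideal.span_mul_span', Ideal.span_mul_span']
  congr 1
  ext f
  simp only [Set.mem_mul, Set.mem_image, Set.mem_setOf_eq]
  constructor
  · rintro ⟨_, ⟨i, j, hA, rfl⟩, _, ⟨_, ⟨a, ha, rfl⟩, _, ⟨b, hb, rfl⟩, rfl⟩, rfl⟩
    refine ⟨_, (gd_iff hn hp hq ht _).2 ⟨i, j, a, b, hA, ha, hb, rfl⟩, ?_⟩
    simp only [X, monomial_mul, mul_one]
  · rintro ⟨d, hd, rfl⟩
    obtain ⟨i, j, a, b, hA, ha, hb, rfl⟩ := (gd_iff hn hp hq ht _).1 hd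
    refine ⟨_, ⟨i, j, hA, rfl⟩, _, ⟨_, ⟨a, ha, rfl⟩, _, ⟨b, hb, rfl⟩, rfl⟩, ?_⟩
    simp only [X, monomial_mul, mul_one]

/-- Lemma `lem2`: for `n ≥ 6`, `G = A_{n-1}` the anticycle on `[n-1]` and `F` the star
on `[n]` with edges `{i, n}`, `1 ≤ i ≤ n-3`, the product `I_G · I_F^2` has linear
quotients via the ordering of its minimal generators in decreasing lexicographic order
induced by `x_n > x_{n-1} > … > x_1`. -/
theorem IGIF2_lex_linear_quotients
    (K : Type*) [Field K] (n : ℕ) (hn : 6 ≤ n) :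
    ∃ L : List (Fin n →₀ ℕ),
      LexDecMinGenOrder (edgeIdeal K (anticycleIn n (n - 1)) * edgeIdeal K (starF n) ^ 2) L ∧
      IsLinQuotOrder K L := by
  obtain ⟨p, hp⟩ : ∃ p : Fin n, p.val = n - 3 := ⟨⟨n - 3, by omega⟩, rfl⟩
  obtain ⟨q, hq⟩ : ∃ q : Fin n, q.val = n - 2 := ⟨⟨n - 2, by omega⟩, rfl⟩
  obtain ⟨t, ht⟩ : ∃ t : Fin n, t.val = n - 1 := ⟨⟨n - 1, by omega⟩, rfl⟩
  rw [ideal_eq K hn hp hq ht]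
  have hfin : {d : Fin n →₀ ℕ | Gd n p q t d}.Finite :=
    (Finsupp.finite_of_degree_eq 6).subset fun d hd => hd.hdeg
  obtain ⟨L, hL, hm⟩ := exists_lex_list _ hfin
  refine ⟨L, ⟨hL, fun d => ?_⟩, ?_⟩
  · rw [hm d, isMinGen_iff (D := 6) _ (fun d hd => hd.hdeg)]
  · exact linQuot_of_exchange _ (fun u hu v hv huv => exchange_gd hn hp hq ht hu hv huv) L hL hm
end
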